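/- For any θ₀ = (γ₀, μ₀, σ₀) ∈ (−1/2, ∞) × ℝ × (0, ∞), there exist a measurable function ℓ̇ : ℝ → [0, ∞) with ∫ ℓ̇² dP_{θ₀} < ∞ and ε₀ > 0 such that for every 0 < ε < ε₀: |ℓ_{θ₁}(x) − ℓ_{θ₂}(x)| ≤ ℓ̇(x) ‖θ₁ − θ₂‖ for all x ∈ S̄(2ε) and all θ₁, θ₂ ∈ (−1/2, ∞) × ℝ × (0, ∞) with ‖θ_j − θ₀‖ < ε (j = 1, 2), where S̄(δ) = ⋂_{θ: ‖θ−θ₀‖<δ} S_θ. -/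

import Mathlib

open MeasureTheory Filter Set

/-- `u_γ(z)` for the GEV family. -/
noncomputable def gevU (γ z : ℝ) : ℝ :=
  if γ = 0 then Real.exp (-z) else (1 + γ * z) ^ (-γ⁻¹)

/-- Lebesgue density of the GEV distribution with parameter `θ = (γ, μ, σ)`. -/
noncomputable def gevDensity (θ : ℝ × ℝ × ℝ) (x : ℝ) : ℝ :=
  if 0 < θ.2.2 + θ.1 * (x - θ.2.1) then
    (θ.2.2)⁻¹ * Real.exp (-(gevU θ.1 ((x - θ.2.1) / θ.2.2))) *
      gevU θ.1 ((x - θ.2.1) / θ.2.2) ^ (θ.1 + 1)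
  else 0

/-- The GEV probability measure with parameter `θ`. -/
noncomputable def gevMeasure (θ : ℝ × ℝ × ℝ) : Measure ℝ :=
  MeasureTheory.volume.withDensity fun x => ENNReal.ofReal (gevDensity θ x)

/-- Log-density of the GEV family (valid on the support `{x | 0 < σ + γ (x − μ)}`):
`ℓ_θ(x) = −log σ − u + (γ + 1) log u`. -/
noncomputable def gevLogDensity (θ : ℝ × ℝ × ℝ) (x : ℝ) : ℝ :=
  -Real.log θ.2.2 - gevU θ.1 ((x - θ.2.1) / θ.2.2)
    + (θ.1 + 1) * Real.log (gevU θ.1 ((x - θ.2.1) / θ.2.2))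

/-- Integral `∫₀¹ ds / (σ + s γ y)`. -/
noncomputable def gevJ (σ w : ℝ) : ℝ := ∫ s in (0:ℝ)..1, (σ + s * (w - σ))⁻¹

lemma gev_ws_pos {σ w s : ℝ} (hσ : 0 < σ) (hw : 0 < w) (hs : s ∈ Icc (0:ℝ) 1) :
    0 < σ + s * (w - σ) := by
  obtain ⟨h0, h1⟩ := hs
  rcases eq_or_lt_of_le h0 with h | h
  · rw [← h]; simpa using hσ
  · nlinarith [mul_pos h hw, mul_nonneg (sub_nonneg.2 h1) hσ.le]

lemma gev_cont {σ w : ℝ} (hσ : 0 < σ) (hw : 0 < w) :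
    ContinuousOn (fun s : ℝ => (σ + s * (w - σ))⁻¹) (uIcc (0:ℝ) 1) := by
  rw [uIcc_of_le zero_le_one]
  apply ContinuousOn.inv₀ (by fun_prop)
  intro s hs
  exact (gev_ws_pos hσ hw hs).ne'

lemma gev_intble {σ w : ℝ} (hσ : 0 < σ) (hw : 0 < w) :
    IntervalIntegrable (fun s : ℝ => (σ + s * (w - σ))⁻¹) volume 0 1 :=
  (gev_cont hσ hw).intervalIntegrable

lemma gevJ_mul {σ γ y : ℝ} (hσ : 0 < σ) (hw : 0 < σ + γ * y) (_hγ : γ ≠ 0) :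
    γ * (y * gevJ σ (σ + γ * y)) = Real.log (1 + γ * (y / σ)) := by
  have h := intervalIntegral.integral_eq_sub_of_hasDerivAt
    (f := fun s : ℝ => Real.log (σ + s * (σ + γ * y - σ)))
    (f' := fun s : ℝ => (γ * y) * (σ + s * (σ + γ * y - σ))⁻¹) (a := 0) (b := 1)
    (by
      intro s hs
      rw [uIcc_of_le zero_le_one] at hs
      have hp := gev_ws_pos hσ hw hs
      have h1 : HasDerivAt (fun s : ℝ => σ + s * (σ + γ * y - σ)) (γ * y) s := by
        have := ((hasDerivAt_id s).mul_const (σ + γ * y - σ)).const_add σ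
        simpa using this
      have := h1.log hp.ne'
      simpa [div_eq_mul_inv] using this)
    ((gev_intble hσ hw).const_mul _)
  rw [intervalIntegral.integral_const_mul] at h
  rw [← mul_assoc, gevJ, h, ← Real.log_div (by simpa using hw.ne') (by simpa using hσ.ne')]
  congr 1
  simp
  field_simp

lemma gevU_eq {σ γ y : ℝ} (hσ : 0 < σ) (hw : 0 < σ + γ * y) :
    gevU γ (y / σ) = Real.exp (-(y * gevJ σ (σ + γ * y))) := by
  unfold gevU
  split_ifs with h
  · subst h
    simp [gevJ, div_eq_mul_inv]
  · have hp : 0 < 1 + γ * (y / σ) := by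
      have : 1 + γ * (y / σ) = (σ + γ * y) / σ := by field_simp
      rw [this]; positivity
    rw [Real.rpow_def_of_pos hp, ← gevJ_mul hσ hw h]
    congr 1
    field_simp

lemma gev_w_eq {σ γ y : ℝ} (hσ : 0 < σ) (hw : 0 < σ + γ * y) :
    σ + γ * y = σ * Real.exp (γ * (y * gevJ σ (σ + γ * y))) := by
  by_cases h : γ = 0
  · subst h; simp
  · have hp : 1 + γ * (y / σ) = (σ + γ * y) / σ := by field_simp
    rw [gevJ_mul hσ hw h, hp, Real.exp_log (by positivity)]
    field_simp

lemma gevJ_nonneg {σ w : ℝ} (hσ : 0 < σ) (hw : 0 < w) : 0 ≤ gevJ σ w := by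
  apply intervalIntegral.integral_nonneg zero_le_one
  intro s hs
  exact (inv_pos.2 (gev_ws_pos hσ hw hs)).le

lemma gevJ_le_four {σ w σ' w' : ℝ} (hσ : 0 < σ) (hw : 0 < w) (h1 : σ / 4 ≤ σ') (h2 : w / 4 ≤ w') :
    gevJ σ' w' ≤ 4 * gevJ σ w := by
  have hσ' : 0 < σ' := by linarith
  have hw' : 0 < w' := by linarith
  unfold gevJ
  rw [← intervalIntegral.integral_const_mul]
  apply intervalIntegral.integral_mono_on zero_le_one (gev_intble hσ' hw')
    ((gev_intble hσ hw).const_mul _)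
  intro s hs
  have hp := gev_ws_pos hσ hw hs
  have h : (σ + s * (w - σ)) / 4 ≤ σ' + s * (w' - σ') := by
    nlinarith [mul_nonneg hs.1 (sub_nonneg.2 h2), mul_nonneg (sub_nonneg.2 hs.2) (sub_nonneg.2 h1)]
  calc (σ' + s * (w' - σ'))⁻¹ ≤ ((σ + s * (w - σ)) / 4)⁻¹ := inv_anti₀ (by positivity) h
    _ = _ := by rw [inv_div, div_eq_mul_inv]

lemma gevJ_le_const {σ w K : ℝ} (hσ : 0 < σ) (hw : 0 < w)
    (h : ∀ s ∈ Icc (0:ℝ) 1, (σ + s * (w - σ))⁻¹ ≤ K) : gevJ σ w ≤ K := by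
  have := intervalIntegral.integral_mono_on zero_le_one (gev_intble hσ hw)
    (intervalIntegrable_const (c := K)) h
  simpa [gevJ] using this

lemma gevJ_ge_const {σ w K : ℝ} (hσ : 0 < σ) (hw : 0 < w)
    (h : ∀ s ∈ Icc (0:ℝ) 1, K ≤ (σ + s * (w - σ))⁻¹) : K ≤ gevJ σ w := by
  have := intervalIntegral.integral_mono_on zero_le_one 
    (intervalIntegrable_const (c := K)) (gev_intble hσ hw) h
  simpa [gevJ] using this

lemma gev_inv_le {σ w s : ℝ} (hσ : 0 < σ) (hw : 0 < w) (hs : s ∈ Icc (0:ℝ) 1) :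
    (σ + s * (w - σ))⁻¹ ≤ σ⁻¹ + w⁻¹ := by
  rcases le_total σ w with h | h
  · have : σ ≤ σ + s * (w - σ) := by nlinarith [hs.1, mul_nonneg hs.1 (sub_nonneg.2 h)]
    have := inv_anti₀ hσ this
    have := inv_pos.2 hw
    linarith
  · have : w ≤ σ + s * (w - σ) := by nlinarith [hs.1, mul_nonneg (sub_nonneg.2 hs.2) (sub_nonneg.2 h)]
    have := inv_anti₀ hw this
    have := inv_pos.2 hσ
    linarith

/-- bound for `|y| / w`. -/
lemma gev_A_le {σ w y : ℝ} (hσ : 0 < σ) (hw : 0 < w) :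
    |y| / w ≤ |y * gevJ σ w| * (σ * (σ⁻¹ + w⁻¹)) := by
  have h1 : (σ + w)⁻¹ ≤ gevJ σ w := by
    apply gevJ_ge_const hσ hw
    intro s hs
    apply inv_anti₀ (gev_ws_pos hσ hw hs)
    nlinarith [mul_nonneg hs.1 hσ.le, mul_nonneg (sub_nonneg.2 hs.2) hw.le]
  rw [abs_mul, abs_of_nonneg (gevJ_nonneg hσ hw)]
  have h2 : |y| / w = |y| * (σ + w)⁻¹ * (σ * (σ⁻¹ + w⁻¹)) := by field_simp; ring
  rw [h2]
  gcongr

lemma gev_k {s a e q A : ℝ} (hs0 : 0 ≤ s) (hs1 : s ≤ 1) (ha : 0 ≤ a) (he : 0 < e) (hq : 0 < q)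
    (heq : e * q ≤ 1 / 2) (hA : s * a * q ≤ A) :
    (s * a * q) * a + 2 * s * a * (e * q) + s * e * (e * q) ≤ 2 * (A * a) + e := by
  have h1 : (s * a * q) * a ≤ A * a := by gcongr
  have h2 : s * e * (e * q) ≤ 1 * e * (1 / 2) := by gcongr
  have h3 : 2 * s * a * (e * q) ≤ (s * a * q) * a + s * e * (e * q) := by
    have := mul_nonneg (mul_nonneg hs0 hq.le) (sq_nonneg (a - e))
    linarith
  linarith

lemma gev_pointwise {σ₀ w₀ y₀ ε σ₁ γ₁ y₁ σ₂ γ₂ y₂ N G s : ℝ} (hσ : 0 < σ₀) (hw : 0 < w₀) (hε : 0 < ε)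
    (h2σ : 2 * ε ≤ σ₀) (h2w : 2 * ε ≤ w₀)
    (hσ₁ : σ₀ / 4 ≤ σ₁) (hw₁ : w₀ / 4 ≤ σ₁ + γ₁ * y₁)
    (hσ₂ : σ₀ / 4 ≤ σ₂) (hw₂ : w₀ / 4 ≤ σ₂ + γ₂ * y₂)
    (hy₂ : |y₂ - y₀| ≤ ε)
    (hy : |y₁ - y₂| ≤ N) (hσσ : |σ₁ - σ₂| ≤ N) (hγγ : |γ₁ - γ₂| ≤ N) (hG : |γ₁| ≤ G)
    (hs : s ∈ Icc (0:ℝ) 1) :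
    |y₁ * (σ₁ + s * (σ₁ + γ₁ * y₁ - σ₁))⁻¹ - y₂ * (σ₂ + s * (σ₂ + γ₂ * y₂ - σ₂))⁻¹| ≤
      N * (4 + 16 * (1 + G) * (|y₀| * (σ₀⁻¹ + w₀⁻¹) + 1 / 2) + 32 * (|y₀| / w₀) * |y₀| + 16 * ε)
       * (σ₀ + s * (w₀ - σ₀))⁻¹ := by
  have hs0 := hs.1
  have hs1 := hs.2
  have hp := gev_ws_pos hσ hw hs
  have hQ := gev_inv_le hσ hw hs
  have hsw : s * w₀ ≤ σ₀ + s * (w₀ - σ₀) := by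
    nlinarith [mul_nonneg (sub_nonneg.2 hs1) hσ.le]
  have hεp : 2 * ε ≤ σ₀ + s * (w₀ - σ₀) := by
    nlinarith [mul_nonneg hs.1 (sub_nonneg.2 h2w), mul_nonneg (sub_nonneg.2 hs.2) (sub_nonneg.2 h2σ)]
  have h1 : (σ₀ + s * (w₀ - σ₀)) / 4 ≤ σ₁ + s * (σ₁ + γ₁ * y₁ - σ₁) := by
    nlinarith [mul_nonneg hs.1 (sub_nonneg.2 hw₁), mul_nonneg (sub_nonneg.2 hs.2) (sub_nonneg.2 hσ₁)]
  have h2 : (σ₀ + s * (w₀ - σ₀)) / 4 ≤ σ₂ + s * (σ₂ + γ₂ * y₂ - σ₂) := by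
    nlinarith [mul_nonneg hs.1 (sub_nonneg.2 hw₂), mul_nonneg (sub_nonneg.2 hs.2) (sub_nonneg.2 hσ₂)]
  generalize hQd : σ₀⁻¹ + w₀⁻¹ = Q at *
  set p := σ₀ + s * (w₀ - σ₀) with hpd
  set P₁ := σ₁ + s * (σ₁ + γ₁ * y₁ - σ₁) with hP₁
  set P₂ := σ₂ + s * (σ₂ + γ₂ * y₂ - σ₂) with hP₂
  have hP1 : 0 < P₁ := by linarith
  have hP2 : 0 < P₂ := by linarith
  have hN : 0 ≤ N := (abs_nonneg _).trans hy
  have hG0 : 0 ≤ G := (abs_nonneg _).trans hG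
  have i1 : P₁⁻¹ ≤ 4 * p⁻¹ := by
    calc P₁⁻¹ ≤ (p / 4)⁻¹ := inv_anti₀ (by positivity) h1
      _ = _ := by rw [inv_div, div_eq_mul_inv]
  have i2 : P₂⁻¹ ≤ 4 * p⁻¹ := by
    calc P₂⁻¹ ≤ (p / 4)⁻¹ := inv_anti₀ (by positivity) h2
      _ = _ := by rw [inv_div, div_eq_mul_inv]
  have e1 : y₁ * P₁⁻¹ - y₂ * P₂⁻¹ = (y₁ - y₂) * P₁⁻¹ + y₂ * (P₂ - P₁) * (P₁⁻¹ * P₂⁻¹) := by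
    field_simp; ring
  have e2 : P₂ - P₁ = (σ₂ - σ₁) + s * (γ₂ - γ₁) * y₂ + s * γ₁ * (y₂ - y₁) := by
    rw [hP₁, hP₂]; ring
  have hyb : |y₂| ≤ |y₀| + ε := by
    calc |y₂| = |y₀ + (y₂ - y₀)| := by ring_nf
      _ ≤ |y₀| + |y₂ - y₀| := abs_add_le _ _
      _ ≤ _ := by linarith
  have b2 : |P₂ - P₁| ≤ N * (1 + G + s * (|y₀| + ε)) := by
    rw [e2]
    calc _ ≤ |σ₂ - σ₁| + |s * (γ₂ - γ₁) * y₂| + |s * γ₁ * (y₂ - y₁)| := abs_add_three _ _ _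
      _ = |σ₁ - σ₂| + s * |γ₁ - γ₂| * |y₂| + s * |γ₁| * |y₁ - y₂| := by
        rw [abs_mul, abs_mul, abs_mul, abs_mul, abs_of_nonneg hs0, abs_sub_comm σ₂, abs_sub_comm γ₂,
          abs_sub_comm y₂]
      _ ≤ N + s * N * (|y₀| + ε) + 1 * G * N := by gcongr
      _ = _ := by ring
  have hq : 0 < p⁻¹ := inv_pos.2 hp
  have hqe : ε * p⁻¹ ≤ 1 / 2 := by
    rw [← div_eq_mul_inv, div_le_iff₀ hp]; linarith
  have hA : s * |y₀| * p⁻¹ ≤ |y₀| / w₀ := by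
    rw [← div_eq_mul_inv, div_le_div_iff₀ hp hw]
    nlinarith [abs_nonneg y₀]
  calc |y₁ * P₁⁻¹ - y₂ * P₂⁻¹| ≤ |(y₁ - y₂) * P₁⁻¹| + |y₂ * (P₂ - P₁) * (P₁⁻¹ * P₂⁻¹)| := by
        rw [e1]; exact abs_add_le _ _
    _ = |y₁ - y₂| * P₁⁻¹ + |y₂| * |P₂ - P₁| * (P₁⁻¹ * P₂⁻¹) := by
        rw [abs_mul, abs_mul, abs_mul, abs_of_pos (inv_pos.2 hP1),
          abs_of_pos (mul_pos (inv_pos.2 hP1) (inv_pos.2 hP2))]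
    _ ≤ N * (4 * p⁻¹) + (|y₀| + ε) * (N * (1 + G + s * (|y₀| + ε))) * ((4 * p⁻¹) * (4 * p⁻¹)) := by
        gcongr
    _ = N * (4 + 16 * (1 + G) * (|y₀| * p⁻¹ + ε * p⁻¹) + 16 * ((s * |y₀| * p⁻¹) * |y₀| +
          2 * s * |y₀| * (ε * p⁻¹) + s * ε * (ε * p⁻¹))) * p⁻¹ := by ring
    _ ≤ N * (4 + 16 * (1 + G) * (|y₀| * Q + 1 / 2) + 32 * (|y₀| / w₀) * |y₀| + 16 * ε) * p⁻¹ := by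
        have k : (s * |y₀| * p⁻¹) * |y₀| +
          2 * s * |y₀| * (ε * p⁻¹) + s * ε * (ε * p⁻¹) ≤ 2 * (|y₀| / w₀ * |y₀|) + ε :=
            gev_k hs0 hs1 (abs_nonneg _) hε hq hqe hA
        have k2 : 16 * (1 + G) * (|y₀| * p⁻¹ + ε * p⁻¹) ≤ 16 * (1 + G) * (|y₀| * Q + 1 / 2) := by
          gcongr
        gcongr ?_ * _
        apply mul_le_mul_of_nonneg_left _ hN
        linarith

lemma gev_diff {σ₀ w₀ y₀ ε σ₁ γ₁ y₁ σ₂ γ₂ y₂ N G : ℝ} (hσ : 0 < σ₀) (hw : 0 < w₀) (hε : 0 < ε)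
    (h2σ : 2 * ε ≤ σ₀) (h2w : 2 * ε ≤ w₀)
    (hσ₁ : σ₀ / 4 ≤ σ₁) (hw₁ : w₀ / 4 ≤ σ₁ + γ₁ * y₁)
    (hσ₂ : σ₀ / 4 ≤ σ₂) (hw₂ : w₀ / 4 ≤ σ₂ + γ₂ * y₂)
    (hy₂ : |y₂ - y₀| ≤ ε)
    (hy : |y₁ - y₂| ≤ N) (hσσ : |σ₁ - σ₂| ≤ N) (hγγ : |γ₁ - γ₂| ≤ N) (hG : |γ₁| ≤ G) :
    |y₁ * gevJ σ₁ (σ₁ + γ₁ * y₁) - y₂ * gevJ σ₂ (σ₂ + γ₂ * y₂)| ≤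
      N * (4 + 16 * (1 + G) * (|y₀| * (σ₀⁻¹ + w₀⁻¹) + 1 / 2) + 32 * (|y₀| / w₀) * |y₀| + 16 * ε)
       * gevJ σ₀ w₀ := by
  have a1 : 0 < σ₁ := by linarith
  have a2 : 0 < σ₂ := by linarith
  have b1 : 0 < σ₁ + γ₁ * y₁ := by linarith
  have b2 : 0 < σ₂ + γ₂ * y₂ := by linarith
  unfold gevJ
  rw [← intervalIntegral.integral_const_mul, ← intervalIntegral.integral_const_mul,
    ← intervalIntegral.integral_const_mul,
    ← intervalIntegral.integral_sub ((gev_intble a1 b1).const_mul _) ((gev_intble a2 b2).const_mul _),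
    ← Real.norm_eq_abs]
  apply intervalIntegral.norm_integral_le_of_norm_le zero_le_one _ ((gev_intble hσ hw).const_mul _)
  refine Filter.Eventually.of_forall fun s hs => ?_
  rw [Real.norm_eq_abs]
  exact gev_pointwise hσ hw hε h2σ h2w hσ₁ hw₁ hσ₂ hw₂ hy₂ hy hσσ hγγ hG ⟨hs.1.le, hs.2⟩

lemma gev_epsJ {σ₀ w₀ ε : ℝ} (hσ : 0 < σ₀) (hw : 0 < w₀) (hε : 0 < ε)
    (h2σ : 2 * ε ≤ σ₀) (h2w : 2 * ε ≤ w₀) : ε * gevJ σ₀ w₀ ≤ 1 / 2 := by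
  have : gevJ σ₀ w₀ ≤ (2 * ε)⁻¹ := by
    apply gevJ_le_const hσ hw
    intro s hs
    apply inv_anti₀ (by positivity)
    nlinarith [mul_nonneg hs.1 (sub_nonneg.2 h2w), mul_nonneg (sub_nonneg.2 hs.2) (sub_nonneg.2 h2σ)]
  calc _ ≤ ε * (2 * ε)⁻¹ := by gcongr
    _ = _ := by field_simp

lemma gev_diff' {σ₀ w₀ y₀ ε σ₁ γ₁ y₁ σ₂ γ₂ y₂ N G t : ℝ} (hσ : 0 < σ₀) (hw : 0 < w₀) (hε : 0 < ε)
    (h2σ : 2 * ε ≤ σ₀) (h2w : 2 * ε ≤ w₀)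
    (hσ₁ : σ₀ / 4 ≤ σ₁) (hw₁ : w₀ / 4 ≤ σ₁ + γ₁ * y₁)
    (hσ₂ : σ₀ / 4 ≤ σ₂) (hw₂ : w₀ / 4 ≤ σ₂ + γ₂ * y₂)
    (hy₂ : |y₂ - y₀| ≤ ε)
    (hy : |y₁ - y₂| ≤ N) (hσσ : |σ₁ - σ₂| ≤ N) (hγγ : |γ₁ - γ₂| ≤ N) (hG : |γ₁| ≤ G)
    (ht : t = y₀ * gevJ σ₀ w₀) :
    |y₁ * gevJ σ₁ (σ₁ + γ₁ * y₁) - y₂ * gevJ σ₂ (σ₂ + γ₂ * y₂)| ≤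
      N * ((4 + 16 * (1 + G) + 40 * σ₀) * (σ₀⁻¹ + w₀⁻¹) * (1 + |t|) ^ 2) := by
  have h := gev_diff hσ hw hε h2σ h2w hσ₁ hw₁ hσ₂ hw₂ hy₂ hy hσσ hγγ hG
  have hN : 0 ≤ N := (abs_nonneg _).trans hy
  have hG0 : 0 ≤ G := (abs_nonneg _).trans hG
  refine h.trans ?_
  rw [mul_assoc]
  apply mul_le_mul_of_nonneg_left _ hN
  have hA := gev_A_le (y := y₀) hσ hw
  have hJ0 := gevJ_nonneg hσ hw
  have hJQ : gevJ σ₀ w₀ ≤ σ₀⁻¹ + w₀⁻¹ := gevJ_le_const hσ hw fun s hs => gev_inv_le hσ hw hs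
  have hJe := gev_epsJ hσ hw hε h2σ h2w
  have ht' : |t| = |y₀| * gevJ σ₀ w₀ := by rw [ht, abs_mul, abs_of_nonneg hJ0]
  rw [← ht] at hA
  have hQ1 : 1 ≤ σ₀ * (σ₀⁻¹ + w₀⁻¹) := by
    have : σ₀ * (σ₀⁻¹ + w₀⁻¹) = 1 + σ₀ / w₀ := by field_simp
    rw [this]; linarith [div_pos hσ hw]
  have hQ0 : 0 < σ₀⁻¹ + w₀⁻¹ := by positivity
  generalize σ₀⁻¹ + w₀⁻¹ = Q at *
  generalize gevJ σ₀ w₀ = J at *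
  have hT : 0 ≤ |t| := abs_nonneg t
  generalize |y₀| / w₀ = A at *
  generalize |y₀| = a at *
  generalize |t| = T at *
  have e : (4 + 16 * (1 + G) * (a * Q + 1 / 2) + 32 * A * a + 16 * ε) * J
    = 4 * J + 16 * (1 + G) * (T * Q + J / 2) + 32 * (A * T) + 16 * (ε * J) := by rw [ht']; ring
  rw [e]
  have hm : 1 ≤ (1 + T) ^ 2 := by nlinarith
  have hm2 : T + 1 / 2 ≤ (1 + T) ^ 2 := by nlinarith
  have hm3 : T ^ 2 + 1 / 4 ≤ (1 + T) ^ 2 := by nlinarith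
  have c1 : 4 * J ≤ 4 * Q * (1 + T) ^ 2 := by nlinarith [mul_nonneg hQ0.le (sub_nonneg.2 hm)]
  have c2 : 16 * (1 + G) * (T * Q + J / 2) ≤ 16 * (1 + G) * (Q * (1 + T) ^ 2) := by
    apply mul_le_mul_of_nonneg_left _ (by positivity)
    nlinarith [mul_nonneg hQ0.le (sub_nonneg.2 hm2)]
  have c3 : A * T ≤ σ₀ * Q * T ^ 2 := by
    calc A * T ≤ (T * (σ₀ * Q)) * T := by gcongr
      _ = _ := by ring
  have c4 : σ₀ * Q * (T ^ 2 + 1 / 4) ≤ σ₀ * Q * (1 + T) ^ 2 := by gcongr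
  have c5 : 0 ≤ σ₀ * Q * T ^ 2 := by positivity
  linarith

lemma gev_g_abs {σ₀ w₀ y₀ ε σ₁ w₁ y₁ t : ℝ} (hσ : 0 < σ₀) (hw : 0 < w₀) (hε : 0 < ε)
    (h2σ : 2 * ε ≤ σ₀) (h2w : 2 * ε ≤ w₀)
    (hσ₁ : σ₀ / 4 ≤ σ₁) (hw₁ : w₀ / 4 ≤ w₁) (hy₁ : |y₁ - y₀| ≤ ε) (ht : t = y₀ * gevJ σ₀ w₀) :
    |y₁ * gevJ σ₁ w₁| ≤ 4 * |t| + 2 ∧ -(y₁ * gevJ σ₁ w₁) ≤ 2 + 4 * max (-t) 0 := by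
  have hJ0 := gevJ_nonneg hσ hw
  have hJ1 := gevJ_nonneg (σ := σ₁) (w := w₁) (by linarith) (by linarith)
  have hJ := gevJ_le_four hσ hw hσ₁ hw₁
  have hJe := gev_epsJ hσ hw hε h2σ h2w
  have ht' : |t| = |y₀| * gevJ σ₀ w₀ := by rw [ht, abs_mul, abs_of_nonneg hJ0]
  have hm : max (-t) 0 = max (-y₀) 0 * gevJ σ₀ w₀ := by
    rw [max_mul_of_nonneg _ _ hJ0, ht]; simp
  constructor
  · rw [abs_mul, abs_of_nonneg hJ1]
    have hyb : |y₁| ≤ |y₀| + ε := by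
      calc |y₁| = |y₀ + (y₁ - y₀)| := by ring_nf
        _ ≤ |y₀| + |y₁ - y₀| := abs_add_le _ _
        _ ≤ _ := by linarith
    calc |y₁| * gevJ σ₁ w₁ ≤ (|y₀| + ε) * (4 * gevJ σ₀ w₀) := by gcongr
      _ ≤ _ := by rw [ht']; linarith
  · have : -y₁ ≤ max (-y₀) 0 + ε := by
      have := (abs_le.1 hy₁).1
      have := le_max_left (-y₀) 0
      linarith
    have h0 : 0 ≤ max (-y₀) 0 := le_max_right _ _
    calc -(y₁ * gevJ σ₁ w₁) = (-y₁) * gevJ σ₁ w₁ := by ring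
      _ ≤ (max (-y₀) 0 + ε) * gevJ σ₁ w₁ := by gcongr
      _ ≤ (max (-y₀) 0 + ε) * (4 * gevJ σ₀ w₀) := by gcongr
      _ ≤ _ := by rw [hm]; linarith

lemma gev_exp_diff {a b M : ℝ} (ha : a ≤ M) (hb : b ≤ M) :
    |Real.exp a - Real.exp b| ≤ Real.exp M * |a - b| := by
  wlog h : b ≤ a generalizing a b
  · rw [abs_sub_comm, abs_sub_comm a]; exact this hb ha (by linarith)
  have h1 := Real.exp_le_exp.2 h
  rw [abs_of_nonneg (by linarith), abs_of_nonneg (by linarith)]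
  have h2 : Real.exp b = Real.exp a * Real.exp (b - a) := by rw [← Real.exp_add]; ring_nf
  have h3 := Real.add_one_le_exp (b - a)
  have h4 := Real.exp_le_exp.2 ha
  have h5 := Real.exp_pos a
  calc Real.exp a - Real.exp b = Real.exp a * (1 - Real.exp (b - a)) := by rw [h2]; ring
    _ ≤ Real.exp a * (a - b) := mul_le_mul_of_nonneg_left (by linarith) h5.le
    _ ≤ _ := by gcongr

lemma gev_log_diff {a b m : ℝ} (hm : 0 < m) (ha : m ≤ a) (hb : m ≤ b) :
    |Real.log a - Real.log b| ≤ m⁻¹ * |a - b| := by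
  wlog h : b ≤ a generalizing a b
  · rw [abs_sub_comm, abs_sub_comm a]; exact this hb ha (by linarith)
  have hb0 : 0 < b := by linarith
  have ha0 : 0 < a := by linarith
  have h1 := Real.log_le_log hb0 h
  rw [abs_of_nonneg (by linarith), abs_of_nonneg (by linarith), ← Real.log_div ha0.ne' hb0.ne']
  have h2 := Real.log_le_sub_one_of_pos (div_pos ha0 hb0)
  have h3 : a / b - 1 = b⁻¹ * (a - b) := by field_simp
  rw [h3] at h2
  have := inv_anti₀ hm hb
  exact h2.trans (by gcongr)

/-- The main deterministic estimate. -/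
lemma gev_main {σ₀ γ₀ y₀ ε σ₁ γ₁ y₁ σ₂ γ₂ y₂ N G t : ℝ} (hσ : 0 < σ₀) (hw : 0 < σ₀ + γ₀ * y₀)
    (hε : 0 < ε) (h2σ : 2 * ε ≤ σ₀) (h2w : 2 * ε ≤ σ₀ + γ₀ * y₀)
    (hσ₁ : σ₀ / 4 ≤ σ₁) (hw₁ : (σ₀ + γ₀ * y₀) / 4 ≤ σ₁ + γ₁ * y₁)
    (hσ₂ : σ₀ / 4 ≤ σ₂) (hw₂ : (σ₀ + γ₀ * y₀) / 4 ≤ σ₂ + γ₂ * y₂)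
    (hy₁ : |y₁ - y₀| ≤ ε) (hy₂ : |y₂ - y₀| ≤ ε)
    (hy : |y₁ - y₂| ≤ N) (hσσ : |σ₁ - σ₂| ≤ N) (hγγ : |γ₁ - γ₂| ≤ N)
    (hG : |γ₁| ≤ G) (hG2 : |γ₂| ≤ G)
    (ht : t = y₀ * gevJ σ₀ (σ₀ + γ₀ * y₀)) :
    |(-Real.log σ₁ - gevU γ₁ (y₁ / σ₁) + (γ₁ + 1) * Real.log (gevU γ₁ (y₁ / σ₁))) -
      (-Real.log σ₂ - gevU γ₂ (y₂ / σ₂) + (γ₂ + 1) * Real.log (gevU γ₂ (y₂ / σ₂)))| ≤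
      N * ((4 * σ₀⁻¹ + 4 + (Real.exp 2 + (G + 1)) * ((4 + 16 * (1 + G) + 40 * σ₀) * σ₀⁻¹)) *
        (Real.exp (4 * max (-t) 0) * (1 + |t|) ^ 2 * (1 + Real.exp (-(γ₀ * t))))) := by
  have hN : 0 ≤ N := (abs_nonneg _).trans hy
  have hG0 : 0 ≤ G := (abs_nonneg _).trans hG
  have hd := gev_diff' hσ hw hε h2σ h2w hσ₁ hw₁ hσ₂ hw₂ hy₂ hy hσσ hγγ hG ht
  obtain ⟨p1, q1⟩ := gev_g_abs hσ hw hε h2σ h2w hσ₁ hw₁ hy₁ ht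
  obtain ⟨p2, q2⟩ := gev_g_abs hσ hw hε h2σ h2w hσ₂ hw₂ hy₂ ht
  have hwe := gev_w_eq hσ hw
  rw [← ht] at hwe
  have hQ : σ₀⁻¹ + (σ₀ + γ₀ * y₀)⁻¹ = σ₀⁻¹ * (1 + Real.exp (-(γ₀ * t))) := by
    rw [hwe, Real.exp_neg, mul_inv]; ring
  rw [hQ] at hd
  rw [gevU_eq (by linarith) (by linarith), gevU_eq (by linarith) (by linarith), Real.log_exp,
    Real.log_exp]
  generalize y₁ * gevJ σ₁ (σ₁ + γ₁ * y₁) = g₁ at *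
  generalize y₂ * gevJ σ₂ (σ₂ + γ₂ * y₂) = g₂ at *
  have hl := gev_log_diff (by positivity) hσ₁ hσ₂
  have he := gev_exp_diff q1 q2
  have hm0 : 0 ≤ max (-t) 0 := le_max_right _ _
  have hE : 1 ≤ Real.exp (4 * max (-t) 0) := Real.one_le_exp (by positivity)
  rw [Real.exp_add] at he
  have hR : 1 ≤ 1 + Real.exp (-(γ₀ * t)) := by linarith [Real.exp_pos (-(γ₀ * t))]
  have hT := abs_nonneg t
  generalize Real.exp (4 * max (-t) 0) = E at *
  generalize 1 + Real.exp (-(γ₀ * t)) = R at *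
  generalize |t| = T at *
  have hC0 : 0 ≤ (4 + 16 * (1 + G) + 40 * σ₀) := by positivity
  generalize (4 + 16 * (1 + G) + 40 * σ₀) = C at *
  have hX : 0 < Real.exp 2 := Real.exp_pos 2
  generalize Real.exp 2 = X at *
  have e1 : (-Real.log σ₁ - Real.exp (-g₁) + (γ₁ + 1) * -g₁) -
      (-Real.log σ₂ - Real.exp (-g₂) + (γ₂ + 1) * -g₂) =
      -(Real.log σ₁ - Real.log σ₂) + -(Real.exp (-g₁) - Real.exp (-g₂)) +
        (-((γ₁ - γ₂) * g₁) + -((γ₂ + 1) * (g₁ - g₂))) := by ring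
  rw [e1]
  have hg2 : |γ₂ + 1| ≤ G + 1 := (abs_add_le _ _).trans (by simpa using hG2)
  have hgg : |-g₁ - -g₂| = |g₁ - g₂| := by rw [← abs_neg]; ring_nf
  rw [hgg] at he
  have hs : (σ₀ / 4)⁻¹ = 4 * σ₀⁻¹ := by rw [inv_div, div_eq_mul_inv]
  rw [hs] at hl
  have hi : 0 < σ₀⁻¹ := inv_pos.2 hσ
  have hM : 1 ≤ (1 + T) ^ 2 := by nlinarith
  have hM2 : 4 * T + 2 ≤ 4 * (1 + T) ^ 2 := by nlinarith
  have f1 : |Real.log σ₁ - Real.log σ₂| ≤ N * (4 * σ₀⁻¹ * (E * (1 + T) ^ 2 * R)) := by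
    have : (1:ℝ) ≤ E * (1 + T) ^ 2 * R := by
      have := one_le_mul_of_one_le_of_one_le (one_le_mul_of_one_le_of_one_le hE hM) hR
      exact this
    calc _ ≤ 4 * σ₀⁻¹ * N := hl.trans (by gcongr)
      _ = N * (4 * σ₀⁻¹ * 1) := by ring
      _ ≤ _ := by gcongr
  have f2 : |Real.exp (-g₁) - Real.exp (-g₂)| ≤ N * (X * (C * σ₀⁻¹) * (E * (1 + T) ^ 2 * R)) := by
    calc _ ≤ X * E * (N * (C * (σ₀⁻¹ * R) * (1 + T) ^ 2)) := he.trans (by gcongr)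
      _ = _ := by ring
  have f3 : |(γ₁ - γ₂) * g₁| ≤ N * (4 * (E * (1 + T) ^ 2 * R)) := by
    rw [abs_mul]
    calc _ ≤ N * (4 * T + 2) := by gcongr
      _ ≤ N * (4 * (1 * (1 + T) ^ 2 * 1)) := by gcongr; linarith
      _ ≤ _ := by gcongr
  have f4 : |(γ₂ + 1) * (g₁ - g₂)| ≤ N * ((G + 1) * (C * σ₀⁻¹) * (E * (1 + T) ^ 2 * R)) := by
    rw [abs_mul]
    calc _ ≤ (G + 1) * (N * (C * (σ₀⁻¹ * R) * (1 + T) ^ 2)) := by gcongr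
      _ = N * ((G + 1) * (C * σ₀⁻¹) * (1 * (1 + T) ^ 2 * R)) := by ring
      _ ≤ _ := by gcongr
  calc _ ≤ |Real.log σ₁ - Real.log σ₂| + |Real.exp (-g₁) - Real.exp (-g₂)| +
        (|(γ₁ - γ₂) * g₁| + |(γ₂ + 1) * (g₁ - g₂)|) := by
        refine (abs_add_three _ _ _).trans ?_
        rw [abs_neg, abs_neg]
        gcongr
        refine (abs_add_le _ _).trans ?_
        rw [abs_neg, abs_neg]
    _ ≤ _ := by linarith

lemma gev_exp_bound {γ a : ℝ} (h0 : 0 < a) (h1 : -γ < a) :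
    ∃ K : ℝ, 0 < K ∧ ∀ t : ℝ, Real.exp (4 * max (-t) 0) * (1 + |t|) ^ 2 * (1 + Real.exp (-(γ * t)))
      ≤ K * (Real.exp (a * t) + Real.exp (-((6 + |γ|) * t))) := by
  obtain ⟨c, hc0, hca⟩ : ∃ c, max 0 (-γ) < c ∧ c < a := exists_between (max_lt h0 h1)
  have hc1 : 0 < c := (le_max_left _ _).trans_lt hc0
  have hc2 : -γ < c := (le_max_right _ _).trans_lt hc0
  obtain ⟨d, hd0, hd⟩ : ∃ d : ℝ, 0 < d ∧ a = c + 2 * d := ⟨(a - c) / 2, by linarith, by ring⟩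
  refine ⟨2 * (1 + d⁻¹) ^ 2 + 2, by positivity, fun t => ?_⟩
  have hA := Real.exp_pos (a * t)
  have hB := Real.exp_pos (-((6 + |γ|) * t))
  have hdi : 0 < d⁻¹ := inv_pos.2 hd0
  rcases le_total 0 t with h | h
  · rw [max_eq_right (by linarith), abs_of_nonneg h]
    have i1 : 1 + t ≤ (1 + d⁻¹) * Real.exp (d * t) := by
      have := Real.add_one_le_exp (d * t)
      have h3 : 0 ≤ d * t := by positivity
      calc 1 + t ≤ (1 + d⁻¹) * (d * t + 1) := by
            have : (1 + d⁻¹) * (d * t + 1) = d * t + 1 + t + d⁻¹ := by field_simp; ring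
            linarith
        _ ≤ _ := by gcongr
    have i2 : 1 + Real.exp (-(γ * t)) ≤ 2 * Real.exp (c * t) := by
      have : 1 ≤ Real.exp (c * t) := Real.one_le_exp (by positivity)
      have : Real.exp (-(γ * t)) ≤ Real.exp (c * t) := Real.exp_le_exp.2 (by nlinarith)
      linarith
    have e : Real.exp (a * t) = Real.exp (d * t) ^ 2 * Real.exp (c * t) := by
      rw [← Real.exp_nat_mul, ← Real.exp_add, hd]; congr 1; push_cast; ring
    calc _ = (1 + t) ^ 2 * (1 + Real.exp (-(γ * t))) := by simp
      _ ≤ ((1 + d⁻¹) * Real.exp (d * t)) ^ 2 * (2 * Real.exp (c * t)) := by gcongr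
      _ = 2 * (1 + d⁻¹) ^ 2 * Real.exp (a * t) := by rw [e]; ring
      _ ≤ (2 * (1 + d⁻¹) ^ 2 + 2) * (Real.exp (a * t) + Real.exp (-((6 + |γ|) * t))) := by
        gcongr <;> linarith
  · rw [max_eq_left (by linarith), abs_of_nonpos h]
    have i1 : 1 + -t ≤ Real.exp (-t) := by linarith [Real.add_one_le_exp (-t)]
    have i2 : 1 + Real.exp (-(γ * t)) ≤ 2 * Real.exp (-(|γ| * t)) := by
      have : 1 ≤ Real.exp (-(|γ| * t)) := Real.one_le_exp (by nlinarith [abs_nonneg γ])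
      have : Real.exp (-(γ * t)) ≤ Real.exp (-(|γ| * t)) :=
        Real.exp_le_exp.2 (by nlinarith [le_abs_self γ])
      linarith
    have e : Real.exp (-((6 + |γ|) * t)) =
        Real.exp (4 * -t) * Real.exp (-t) ^ 2 * Real.exp (-(|γ| * t)) := by
      rw [← Real.exp_nat_mul, ← Real.exp_add, ← Real.exp_add]; congr 1; push_cast; ring
    have h1t : 0 ≤ 1 + -t := by linarith
    calc _ ≤ Real.exp (4 * -t) * Real.exp (-t) ^ 2 * (2 * Real.exp (-(|γ| * t))) := by gcongr
      _ = 2 * Real.exp (-((6 + |γ|) * t)) := by rw [e]; ring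
      _ ≤ (2 * (1 + d⁻¹) ^ 2 + 2) * (Real.exp (a * t) + Real.exp (-((6 + |γ|) * t))) := by
        gcongr
        · have : 0 ≤ 2 * (1 + d⁻¹) ^ 2 := by positivity
          linarith
        · linarith

/-- inverse of `x ↦ u`. -/
noncomputable def gevPhi (γ μ σ u : ℝ) : ℝ :=
  if γ = 0 then μ - σ * Real.log u else μ + σ * ((u ^ (-γ) - 1) / γ)

lemma gevU_pos {γ z : ℝ} (h : 0 < 1 + γ * z) : 0 < gevU γ z := by
  unfold gevU
  split_ifs
  · positivity
  · positivity

lemma gevPhi_gevU {γ μ σ x : ℝ} (hσ : 0 < σ) (h : 0 < σ + γ * (x - μ)) :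
    0 < gevU γ ((x - μ) / σ) ∧ gevPhi γ μ σ (gevU γ ((x - μ) / σ)) = x := by
  have hp : 0 < 1 + γ * ((x - μ) / σ) := by
    have : 1 + γ * ((x - μ) / σ) = (σ + γ * (x - μ)) / σ := by field_simp
    rw [this]; positivity
  refine ⟨gevU_pos hp, ?_⟩
  unfold gevPhi gevU
  split_ifs with h0
  · rw [Real.log_exp]; field_simp; ring
  · rw [← Real.rpow_mul hp.le]
    have : -γ⁻¹ * -γ = 1 := by field_simp
    rw [this, Real.rpow_one]; field_simp; ring

lemma gevU_gevPhi {γ μ σ u : ℝ} (hσ : 0 < σ) (hu : 0 < u) :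
    gevU γ ((gevPhi γ μ σ u - μ) / σ) = u := by
  unfold gevPhi gevU
  split_ifs with h0
  · have : -((μ - σ * Real.log u - μ) / σ) = Real.log u := by field_simp; ring
    rw [this, Real.exp_log hu]
  · have : 1 + γ * ((μ + σ * ((u ^ (-γ) - 1) / γ) - μ) / σ) = u ^ (-γ) := by field_simp; ring
    rw [this, ← Real.rpow_mul hu.le]
    have : -γ * -γ⁻¹ = 1 := by field_simp
    rw [this, Real.rpow_one]

lemma gevPhi_deriv {γ μ σ u : ℝ} (hu : 0 < u) :
    HasDerivAt (gevPhi γ μ σ) (-(σ * u ^ (-γ - 1))) u := by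
  by_cases h0 : γ = 0
  · have : gevPhi γ μ σ = fun u => μ - σ * Real.log u := by
      funext v; simp [gevPhi, h0]
    rw [this, h0]
    have := ((Real.hasDerivAt_log hu.ne').const_mul σ).const_sub μ
    simpa [Real.rpow_neg_one] using this
  · have : gevPhi γ μ σ = fun u => μ + σ * ((u ^ (-γ) - 1) / γ) := by
      funext v; simp [gevPhi, h0]
    rw [this]
    have := ((((Real.hasDerivAt_rpow_const (p := -γ) (Or.inl hu.ne')).sub_const 1).div_const
      γ).const_mul σ).const_add μ
    have e : σ * (-γ * u ^ (-γ - 1) / γ) = -(σ * u ^ (-γ - 1)) := by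
      rw [neg_mul, neg_div, mul_div_cancel_left₀ _ h0, mul_neg]
    rw [← e]
    exact this

lemma gevU_measurable (γ μ σ : ℝ) : Measurable fun x : ℝ => gevU γ ((x - μ) / σ) := by
  unfold gevU
  split_ifs <;> fun_prop

lemma gevDensity_measurable (θ : ℝ × ℝ × ℝ) : Measurable (gevDensity θ) := by
  unfold gevDensity
  have := gevU_measurable θ.1 θ.2.1 θ.2.2
  apply Measurable.ite
  · exact measurableSet_lt measurable_const (by fun_prop)
  · fun_prop
  · fun_prop

lemma gev_lintegral (γ μ σ a b K : ℝ) (hσ : 0 < σ) (ha : a < 1 / 2) (hb : 0 < b) :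
    (∫⁻ x, ENNReal.ofReal ((K * (Real.exp (-(a * Real.log (gevU γ ((x - μ) / σ)))) +
      Real.exp (b * Real.log (gevU γ ((x - μ) / σ))))) ^ 2) ∂(gevMeasure (γ, μ, σ))) < ⊤ := by
  have hU := gevU_measurable γ μ σ
  have hD := gevDensity_measurable (γ, μ, σ)
  set L : ℝ → ℝ := fun x => K * (Real.exp (-(a * Real.log (gevU γ ((x - μ) / σ)))) +
      Real.exp (b * Real.log (gevU γ ((x - μ) / σ)))) with hL
  have hLm : Measurable L := by fun_prop
  have hDn : ∀ x, 0 ≤ gevDensity (γ, μ, σ) x := by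
    intro x
    unfold gevDensity
    split_ifs with h
    · have := (gevPhi_gevU hσ h).1
      dsimp only at h ⊢
      positivity
    · exact le_rfl
  unfold gevMeasure
  rw [lintegral_withDensity_eq_lintegral_mul _ (by fun_prop) (by fun_prop)]
  set F : ℝ → ENNReal := fun x => ENNReal.ofReal (gevDensity (γ, μ, σ) x * L x ^ 2) with hF
  have e0 : (((fun x => ENNReal.ofReal (gevDensity (γ, μ, σ) x)) * fun x => ENNReal.ofReal (L x ^ 2)))
      = F := by
    funext x
    simp only [Pi.mul_apply, hF]
    rw [ENNReal.ofReal_mul (hDn x)]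
  have e1 : ∫⁻ x, F x ≤ ∫⁻ x in gevPhi γ μ σ '' Ioi 0, F x := by
    rw [← lintegral_indicator₀]
    · apply lintegral_mono
      intro x
      by_cases h : 0 < σ + γ * (x - μ)
      · rw [indicator_of_mem]
        exact ⟨_, (gevPhi_gevU hσ h).1, (gevPhi_gevU hσ h).2⟩
      · have : F x = 0 := by simp [hF, gevDensity, h]
        rw [this]; exact zero_le
    · apply MeasurableSet.nullMeasurableSet
      apply MeasurableSet.image_of_continuousOn_injOn measurableSet_Ioi
      · intro u hu
        exact (gevPhi_deriv hu).continuousAt.continuousWithinAt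
      · intro u hu v hv huv
        rw [← gevU_gevPhi (γ := γ) (μ := μ) hσ hu, huv, gevU_gevPhi hσ hv]
  have hint : IntegrableOn (fun u : ℝ => K ^ 2 * (2 * (Real.exp (-u) * u ^ ((1 - 2 * a) - 1) +
      Real.exp (-u) * u ^ ((1 + 2 * b) - 1)))) (Ioi 0) :=
    (((Real.GammaIntegral_convergent (by linarith)).add
      (Real.GammaIntegral_convergent (by linarith))).const_mul _).const_mul _
  calc _ = ∫⁻ x, F x := by rw [← e0]
    _ ≤ _ := e1
    _ = ∫⁻ u in Ioi 0, ENNReal.ofReal |(-(σ * u ^ (-γ - 1)))| * F (gevPhi γ μ σ u) := by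
      apply lintegral_image_eq_lintegral_abs_deriv_mul measurableSet_Ioi
      · intro u hu
        exact (gevPhi_deriv hu).hasDerivWithinAt
      · intro u hu v hv huv
        rw [← gevU_gevPhi (γ := γ) (μ := μ) hσ hu, huv, gevU_gevPhi hσ hv]
    _ ≤ ∫⁻ u in Ioi 0, ENNReal.ofReal (K ^ 2 * (2 * (Real.exp (-u) * u ^ ((1 - 2 * a) - 1) +
      Real.exp (-u) * u ^ ((1 + 2 * b) - 1)))) := by
      apply setLIntegral_mono' measurableSet_Ioi
      intro u hu
      have hu : 0 < u := hu
      simp only [hF]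
      rw [← ENNReal.ofReal_mul (abs_nonneg _)]
      apply ENNReal.ofReal_le_ofReal
      have hd : gevDensity (γ, μ, σ) (gevPhi γ μ σ u) ≤ σ⁻¹ * Real.exp (-u) * u ^ (γ + 1) := by
        unfold gevDensity
        dsimp only
        rw [gevU_gevPhi hσ hu]
        split_ifs
        · exact le_rfl
        · positivity
      have hl : L (gevPhi γ μ σ u) ^ 2 ≤ K ^ 2 * (2 * (u ^ (-(2 * a)) + u ^ (2 * b))) := by
        simp only [hL]
        rw [gevU_gevPhi hσ hu, mul_pow]
        apply mul_le_mul_of_nonneg_left _ (sq_nonneg K)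
        have e2 : u ^ (-(2 * a)) = Real.exp (-(a * Real.log u)) ^ 2 := by
          rw [Real.rpow_def_of_pos hu, ← Real.exp_nat_mul]; congr 1; push_cast; ring
        have e3 : u ^ (2 * b) = Real.exp (b * Real.log u) ^ 2 := by
          rw [Real.rpow_def_of_pos hu, ← Real.exp_nat_mul]; congr 1; push_cast; ring
        rw [e2, e3]
        exact add_sq_le
      have habs : |(-(σ * u ^ (-γ - 1)))| = σ * u ^ (-γ - 1) := by
        rw [abs_neg, abs_of_pos (by positivity)]
      rw [habs]
      calc _ ≤ σ * u ^ (-γ - 1) * (σ⁻¹ * Real.exp (-u) * u ^ (γ + 1) *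
            (K ^ 2 * (2 * (u ^ (-(2 * a)) + u ^ (2 * b))))) := by gcongr
        _ = (σ * σ⁻¹) * (u ^ (-γ - 1) * u ^ (γ + 1)) * (K ^ 2 * (2 * (Real.exp (-u) * u ^ (-(2 * a)) +
            Real.exp (-u) * u ^ (2 * b)))) := by ring
        _ = _ := by
          rw [mul_inv_cancel₀ hσ.ne', ← Real.rpow_add hu]
          have e4 : -γ - 1 + (γ + 1) = 0 := by ring
          have e5 : (1 - 2 * a) - 1 = -(2 * a) := by ring
          have e6 : (1 + 2 * b) - 1 = 2 * b := by ring
          rw [e4, e5, e6, Real.rpow_zero]; ring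
    _ < ⊤ := hint.lintegral_lt_top

/-- comparability of the affine supports functions. -/
lemma gev_w_compare {γ₀ μ₀ σ₀ ε x : ℝ} (hγ : -(1/2) < γ₀)
    (hε : 0 < ε) (hε1 : ε ≤ 1 / 2) (hεσ : 4 * ε ≤ σ₀) (hεγ : 2 * ε ≤ γ₀ + 1 / 2)
    (hx : ∀ θ : ℝ × ℝ × ℝ, -(1/2) < θ.1 → 0 < θ.2.2 → ‖θ - (γ₀, μ₀, σ₀)‖ < 2 * ε →
          0 < θ.2.2 + θ.1 * (x - θ.2.1)) :
    2 * ε ≤ σ₀ + γ₀ * (x - μ₀) ∧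
    ∀ γ μ σ : ℝ, |γ - γ₀| < ε → |μ - μ₀| < ε → |σ - σ₀| < ε →
      (σ₀ + γ₀ * (x - μ₀)) / 4 ≤ σ + γ * (x - μ) := by
  have key : ∀ γ μ σ : ℝ, |γ - γ₀| < 2 * ε → |μ - μ₀| < 2 * ε → |σ - σ₀| < 2 * ε →
      0 < σ + γ * (x - μ) := by
    intro γ μ σ h1 h2 h3
    have := hx (γ, μ, σ) (by have := (abs_lt.1 h1).1; dsimp only; linarith)
      (by have := (abs_lt.1 h3).1; dsimp only; linarith)
      (by simp only [Prod.mk_sub_mk, Prod.norm_mk, Real.norm_eq_abs, max_lt_iff]; exact ⟨h1, h2, h3⟩)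
    exact this
  have hw : 2 * ε ≤ σ₀ + γ₀ * (x - μ₀) := by
    apply le_of_forall_lt
    intro r hr
    rcases le_or_gt 0 r with h | h
    · have := key γ₀ μ₀ (σ₀ - r) (by simp; linarith) (by simp; linarith)
        (by have : σ₀ - r - σ₀ = -r := by ring
            rw [this, abs_neg, abs_of_nonneg h]; exact hr)
      linarith
    · have := key γ₀ μ₀ σ₀ (by simp; linarith) (by simp; linarith) (by simp; linarith)
      linarith
  refine ⟨hw, fun γ μ σ h1 h2 h3 => ?_⟩
  have h := key (γ₀ + 2 * (γ - γ₀)) (μ₀ + 2 * (μ - μ₀)) (σ₀ + 2 * (σ - σ₀))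
    (by rw [add_sub_cancel_left, abs_mul, abs_two]; linarith)
    (by rw [add_sub_cancel_left, abs_mul, abs_two]; linarith)
    (by rw [add_sub_cancel_left, abs_mul, abs_two]; linarith)
  have hp : |(γ - γ₀) * (μ - μ₀)| ≤ ε * ε := by
    rw [abs_mul]; gcongr
  have hp' := (abs_le.1 hp).1
  have hee : ε * ε ≤ ε / 2 := by nlinarith
  have id : σ + γ * (x - μ) = ((σ₀ + γ₀ * (x - μ₀)) + (σ₀ + 2 * (σ - σ₀) + (γ₀ + 2 * (γ - γ₀)) *
    (x - (μ₀ + 2 * (μ - μ₀))))) / 2 + (γ - γ₀) * (μ - μ₀) := by ring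
  rw [id]
  linarith

/-- **Lipschitz condition for the GEV log-likelihood** at `θ₀ = (γ₀, μ₀, σ₀)` with
`γ₀ > −1/2`, `σ₀ > 0`, relative to the parameter set `Θ = (−1/2, ∞) × ℝ × (0, ∞)`:
there are a measurable `ℓ̇ ≥ 0` with `∫ ℓ̇² dP_{θ₀} < ∞` and `ε₀ > 0` such that for all
`0 < ε < ε₀`, `|ℓ_{θ₁}(x) − ℓ_{θ₂}(x)| ≤ ℓ̇(x) ‖θ₁ − θ₂‖` whenever `x ∈ S̄(2ε)` (`x` lies in
the support of every `θ ∈ Θ` with `‖θ − θ₀‖ < 2ε`) and `θ₁, θ₂ ∈ Θ` with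
`‖θ_j − θ₀‖ < ε`. -/
theorem gev_lipschitz_condition (θ₀ : ℝ × ℝ × ℝ) (hγ : -(1/2) < θ₀.1) (hσ : 0 < θ₀.2.2) :
    ∃ (ℓdot : ℝ → ℝ) (ε₀ : ℝ),
      Measurable ℓdot ∧ (∀ x, 0 ≤ ℓdot x) ∧
      (∫⁻ x, ENNReal.ofReal (ℓdot x ^ 2) ∂(gevMeasure θ₀)) < ⊤ ∧
      0 < ε₀ ∧
      ∀ ε : ℝ, 0 < ε → ε < ε₀ → ∀ x : ℝ,
        (∀ θ : ℝ × ℝ × ℝ, -(1/2) < θ.1 → 0 < θ.2.2 → ‖θ - θ₀‖ < 2 * ε →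
          0 < θ.2.2 + θ.1 * (x - θ.2.1)) →
        ∀ θ₁ θ₂ : ℝ × ℝ × ℝ,
          -(1/2) < θ₁.1 → 0 < θ₁.2.2 → ‖θ₁ - θ₀‖ < ε →
          -(1/2) < θ₂.1 → 0 < θ₂.2.2 → ‖θ₂ - θ₀‖ < ε →
          |gevLogDensity θ₁ x - gevLogDensity θ₂ x| ≤ ℓdot x * ‖θ₁ - θ₂‖ := by
  obtain ⟨γ₀, μ₀, σ₀⟩ := θ₀
  dsimp only at hγ hσ
  obtain ⟨a, ha0, ha1⟩ : ∃ a, max 0 (-γ₀) < a ∧ a < 1 / 2 :=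
    exists_between (max_lt (by norm_num) (by linarith))
  obtain ⟨K, hK, hbound⟩ := gev_exp_bound (γ := γ₀) (a := a) ((le_max_left _ _).trans_lt ha0)
    ((le_max_right _ _).trans_lt ha0)
  set G := |γ₀| + 1 with hG
  have hG0 : 0 < G := by positivity
  set C := (4 * σ₀⁻¹ + 4 + (Real.exp 2 + (G + 1)) * ((4 + 16 * (1 + G) + 40 * σ₀) * σ₀⁻¹)) with hC
  have hC0 : 0 < C := by positivity
  refine ⟨fun x => (C * K) * (Real.exp (-(a * Real.log (gevU γ₀ ((x - μ₀) / σ₀)))) +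
      Real.exp ((6 + |γ₀|) * Real.log (gevU γ₀ ((x - μ₀) / σ₀)))),
      min (1 / 2) (min (σ₀ / 4) ((γ₀ + 1 / 2) / 2)), ?_, ?_, ?_, ?_, ?_⟩
  · have := gevU_measurable γ₀ μ₀ σ₀
    fun_prop
  · intro x; positivity
  · exact gev_lintegral γ₀ μ₀ σ₀ a (6 + |γ₀|) (C * K) hσ ha1 (by positivity)
  · refine lt_min (by norm_num) (lt_min (by positivity) (by linarith))
  · intro ε hε hε0 x hx θ₁ θ₂ _ _ hθ₁ _ _ hθ₂
    obtain ⟨γ₁, μ₁, σ₁⟩ := θ₁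
    obtain ⟨γ₂, μ₂, σ₂⟩ := θ₂
    obtain ⟨l1, l2⟩ := lt_min_iff.1 hε0
    obtain ⟨l2, l3⟩ := lt_min_iff.1 l2
    obtain ⟨hw, hcmp⟩ := gev_w_compare hγ hε l1.le (by linarith) (by linarith) hx
    simp only [Prod.mk_sub_mk, Prod.norm_mk, Real.norm_eq_abs, max_lt_iff] at hθ₁ hθ₂
    obtain ⟨a1, b1, c1⟩ := hθ₁
    obtain ⟨a2, b2, c2⟩ := hθ₂
    have hN : ‖((γ₁, μ₁, σ₁) : ℝ × ℝ × ℝ) - (γ₂, μ₂, σ₂)‖ = max |γ₁ - γ₂| (max |μ₁ - μ₂| |σ₁ - σ₂|) := by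
      simp only [Prod.mk_sub_mk, Prod.norm_mk, Real.norm_eq_abs]
    rw [hN]
    set N := max |γ₁ - γ₂| (max |μ₁ - μ₂| |σ₁ - σ₂|) with hNd
    have n1 : |γ₁ - γ₂| ≤ N := le_max_left _ _
    have n2 : |μ₁ - μ₂| ≤ N := (le_max_left _ _).trans (le_max_right _ _)
    have n3 : |σ₁ - σ₂| ≤ N := (le_max_right _ _).trans (le_max_right _ _)
    have hN0 : 0 ≤ N := (abs_nonneg _).trans n1
    have hwp : 0 < σ₀ + γ₀ * (x - μ₀) := by linarith
    have gG : ∀ γ : ℝ, |γ - γ₀| < ε → |γ| ≤ G := by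
      intro γ h
      calc |γ| = |γ₀ + (γ - γ₀)| := by ring_nf
        _ ≤ |γ₀| + |γ - γ₀| := abs_add_le _ _
        _ ≤ G := by rw [hG]; linarith
    have main := gev_main (y₀ := x - μ₀) (y₁ := x - μ₁) (y₂ := x - μ₂) (N := N) (G := G) hσ hwp hε
      (by linarith) hw (by have := (abs_lt.1 c1).1; linarith) (hcmp γ₁ μ₁ σ₁ a1 b1 c1)
      (by have := (abs_lt.1 c2).1; linarith) (hcmp γ₂ μ₂ σ₂ a2 b2 c2)
      (by rw [show x - μ₁ - (x - μ₀) = -(μ₁ - μ₀) by ring, abs_neg]; exact b1.le)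
      (by rw [show x - μ₂ - (x - μ₀) = -(μ₂ - μ₀) by ring, abs_neg]; exact b2.le)
      (by rw [show x - μ₁ - (x - μ₂) = -(μ₁ - μ₂) by ring, abs_neg]; exact n2)
      n3 n1 (gG _ a1) (gG _ a2) rfl
    unfold gevLogDensity
    dsimp only
    refine main.trans ?_
    rw [gevU_eq hσ hwp, Real.log_exp]
    generalize (x - μ₀) * gevJ σ₀ (σ₀ + γ₀ * (x - μ₀)) = t
    have hb := hbound t
    rw [← hC]
    calc _ ≤ N * (C * (K * (Real.exp (a * t) + Real.exp (-((6 + |γ₀|) * t))))) := by gcongr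
      _ = _ := by rw [mul_neg, neg_neg, mul_neg]; ring
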